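/- arXiv:1203.2889 — 2 statements merged into one kernel-verified Lean document; each statement's English description precedes it below -/
import Mathlib

section
/- Let k be a field of characteristic ≠ 2, V a finite-dimensional k-vector space, and Q a quadratic form on V whose polar form is nondegenerate. Let g be a unit of Cl(V,Q) lying in the even part Cl₊(V,Q), and let σ : V → V be a k-linear map such that ι(σ(v)) = g · ι(v) · g⁻¹ for all v ∈ V. Then the determinant of σ equals 1; that is, the adjoint action of CSpin(V) lands in the special orthogonal group SO(V,Q). -/
/-!
The Clifford algebra of a free module of rank `n` carries a linear functional `τ`, the coefficient
of degree `n` after identifying `Cl(V, Q)` with the exterior algebra by means of a bilinear form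
`B` with `B(v, v) = -Q(v)`. It sends a product of `n` vectors to their determinant. Multiplication
by a vector on either side is exterior multiplication up to a contraction, which has no component
of degree `n`; hence `τ (x v) = τ (v α(x))`, where `α` is the grade involution. Moving two
vectors around the product in this way gives `τ (g x) = τ (x g)` for even `g`. For a basis
`e₁, …, eₙ`, the products `σ e₁ ⋯ σ eₙ` and `e₁ ⋯ eₙ` are conjugate under `g`, so `τ` takes the
same value on both, and these values are `det σ` and `1`.
-/

open CliffordAlgebra

section ChangeForm

variable {R M : Type*} [CommRing R] [AddCommGroup M] [Module R M]
  {Q Q' : QuadraticForm R M} {B : LinearMap.BilinForm R M}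

theorem changeForm_mul_ι (h : B.toQuadraticMap = Q' - Q) (x : CliffordAlgebra Q) (v : M) :
    changeForm h (x * ι Q v) = ι Q' v * changeForm h (involute x) +
      contractLeft (B.flip v - Q'.polarBilin v) (changeForm h (involute x)) := by
  induction x using CliffordAlgebra.left_induction with
  | algebraMap r =>
    simp only [← Algebra.smul_def, AlgHom.commutes, map_smul, changeForm_ι, changeForm_algebraMap,
      contractLeft_algebraMap, add_zero, ← Algebra.commutes r (ι Q' v)]
  | add x y hx hy => simp only [add_mul, map_add, hx, hy, mul_add]; abel
  | ι_mul x w hx =>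
    set y := changeForm h (involute x)
    set d := B.flip v - Q'.polarBilin v
    have d_apply : d w = B w v - QuadraticMap.polar Q' v w := rfl
    have swap : ι Q' w * (ι Q' v * y) =
        QuadraticMap.polar Q' v w • y - ι Q' v * (ι Q' w * y) := by
      rw [← mul_assoc, ← mul_assoc, ι_mul_ι_comm, sub_mul, ← Algebra.smul_def,
        QuadraticMap.polar_comm]
    have involute_side : changeForm h (involute (ι Q w * x)) =
        contractLeft (B w) y - ι Q' w * y := by
      rw [map_mul, involute_ι, neg_mul, map_neg, changeForm_ι_mul, neg_sub]
    rw [mul_assoc, changeForm_ι_mul, hx, involute_side]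
    simp only [map_add, map_sub, mul_add, mul_sub, contractLeft_ι_mul, swap,
      contractLeft_comm (B w) d, d_apply, sub_smul]
    abel

end ChangeForm

section DegreeFiltration

variable {R M : Type*} [CommRing R] [AddCommGroup M] [Module R M]
  {Q Q' : QuadraticForm R M} {B : LinearMap.BilinForm R M}

/-- The degree filtration of a Clifford algebra: the span of the products of fewer than `m`
vectors. The strict inequality makes the bottom step zero rather than the scalars, so that
contractions lower the filtration index even on scalars. -/
def cliffordDegreeLT (Q : QuadraticForm R M) (m : ℕ) : Submodule R (CliffordAlgebra Q) :=
  Submodule.span R {x | ∃ l : List M, l.length < m ∧ (l.map (ι Q)).prod = x}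

theorem prod_map_ι_mem_cliffordDegreeLT {l : List M} {m : ℕ} (hl : l.length < m) :
    (l.map (ι Q)).prod ∈ cliffordDegreeLT Q m :=
  Submodule.subset_span ⟨l, hl, rfl⟩

theorem cliffordDegreeLT_mono : Monotone (cliffordDegreeLT Q) := fun _ _ hmn =>
  Submodule.span_mono fun _ ⟨l, hl, hx⟩ => ⟨l, hl.trans_le hmn, hx⟩

theorem ι_mul_mem_cliffordDegreeLT (v : M) {x : CliffordAlgebra Q} {m : ℕ}
    (hx : x ∈ cliffordDegreeLT Q m) : ι Q v * x ∈ cliffordDegreeLT Q (m + 1) := by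
  refine (Submodule.span_le (p := (cliffordDegreeLT Q (m + 1)).comap
    (LinearMap.mulLeft R (ι Q v)))).2 ?_ hx
  rintro _ ⟨l, hl, rfl⟩
  exact prod_map_ι_mem_cliffordDegreeLT (l := v :: l) (Nat.succ_lt_succ hl)

theorem contractLeft_prod_map_ι_mem_cliffordDegreeLT (d : Module.Dual R M) (l : List M) :
    contractLeft d (l.map (ι Q)).prod ∈ cliffordDegreeLT Q l.length := by
  induction l with
  | nil => simp only [List.map_nil, List.prod_nil, contractLeft_one, Submodule.zero_mem]
  | cons v l ih =>
    rw [List.map_cons, List.prod_cons, contractLeft_ι_mul]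
    exact Submodule.sub_mem _
      (Submodule.smul_mem _ _ (prod_map_ι_mem_cliffordDegreeLT l.length.lt_succ_self))
      (ι_mul_mem_cliffordDegreeLT v ih)

theorem contractLeft_mem_cliffordDegreeLT (d : Module.Dual R M) {x : CliffordAlgebra Q} {m : ℕ}
    (hx : x ∈ cliffordDegreeLT Q (m + 1)) : contractLeft d x ∈ cliffordDegreeLT Q m := by
  refine (Submodule.span_le (p := (cliffordDegreeLT Q m).comap (contractLeft d))).2 ?_ hx
  rintro _ ⟨l, hl, rfl⟩
  exact cliffordDegreeLT_mono (Nat.le_of_lt_succ hl)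
    (contractLeft_prod_map_ι_mem_cliffordDegreeLT d l)

theorem changeForm_prod_map_ι_sub_mem_cliffordDegreeLT (h : B.toQuadraticMap = Q' - Q)
    (l : List M) :
    changeForm h (l.map (ι Q)).prod - (l.map (ι Q')).prod ∈ cliffordDegreeLT Q' l.length := by
  induction l with
  | nil => simp only [List.map_nil, List.prod_nil, changeForm_one, sub_self, Submodule.zero_mem]
  | cons v l ih =>
    have image_mem : changeForm h (l.map (ι Q)).prod ∈ cliffordDegreeLT Q' (l.length + 1) :=
      (Submodule.sub_mem_iff_left _ (prod_map_ι_mem_cliffordDegreeLT l.length.lt_succ_self)).1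
        (cliffordDegreeLT_mono l.length.le_succ ih)
    simp only [List.map_cons, List.prod_cons, List.length_cons, changeForm_ι_mul]
    rw [sub_right_comm, ← mul_sub]
    exact Submodule.sub_mem _ (ι_mul_mem_cliffordDegreeLT v ih)
      (cliffordDegreeLT_mono l.length.le_succ (contractLeft_mem_cliffordDegreeLT (B v) image_mem))

end DegreeFiltration

theorem alternatingMap_eq_zero_of_card_basis_lt {R M N ι κ : Type*} [CommRing R] [AddCommGroup M]
    [Module R M] [AddCommMonoid N] [Module R N] [Fintype ι] [Fintype κ] (e : Module.Basis ι R M)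
    (hcard : Fintype.card ι < Fintype.card κ) (f : M [⋀^κ]→ₗ[R] N) : f = 0 :=
  e.ext_alternating fun w hw => absurd hcard (Fintype.card_le_of_injective w hw).not_gt

section TopCoefficient

variable {R M : Type*} [CommRing R] [AddCommGroup M] [Module R M] {n : ℕ}
  (e : Module.Basis (Fin n) R M)

/-- The Berezin integral on the exterior algebra of a free module: the coefficient of
`e₁ ∧ ⋯ ∧ eₙ`, a functional that vanishes on every contraction. -/
noncomputable def berezinIntegral : ExteriorAlgebra R M →ₗ[R] R :=
  ExteriorAlgebra.liftAlternating (Pi.single n e.det)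

theorem berezinIntegral_ιMulti (v : Fin n → M) :
    berezinIntegral e (ExteriorAlgebra.ιMulti R n v) = e.det v := by
  rw [berezinIntegral, ExteriorAlgebra.liftAlternating_apply_ιMulti, Pi.single_eq_same]

theorem berezinIntegral_eq_zero_of_mem_cliffordDegreeLT {x : ExteriorAlgebra R M}
    (hx : x ∈ cliffordDegreeLT (0 : QuadraticForm R M) n) : berezinIntegral e x = 0 := by
  refine (Submodule.span_le (p := LinearMap.ker (berezinIntegral e))).2 ?_ hx
  rintro _ ⟨l, hl, rfl⟩
  have prod_eq : (l.map (ι (0 : QuadraticForm R M))).prod =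
      ExteriorAlgebra.ιMulti R l.length l.get := by
    conv_lhs => rw [← List.ofFn_get l, List.map_ofFn]
    rfl
  rw [SetLike.mem_coe, LinearMap.mem_ker, prod_eq, berezinIntegral,
    ExteriorAlgebra.liftAlternating_apply_ιMulti, Pi.single_eq_of_ne hl.ne,
    AlternatingMap.zero_apply]

theorem berezinIntegral_contractLeft (d : Module.Dual R M) (x : ExteriorAlgebra R M) :
    berezinIntegral e (contractLeft d x) = 0 := by
  suffices berezinIntegral e ∘ₗ contractLeft d = 0 from LinearMap.congr_fun this x
  ext m v
  rcases lt_or_ge n m with hnm | hmn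
  · have hcard : Fintype.card (Fin n) < Fintype.card (Fin m) := by
      simpa only [Fintype.card_fin] using hnm
    rw [LinearMap.compAlternatingMap_apply, LinearMap.compAlternatingMap_apply,
      alternatingMap_eq_zero_of_card_basis_lt e hcard (ExteriorAlgebra.ιMulti R m),
      AlternatingMap.zero_apply, map_zero, map_zero]
  · have contract_mem := contractLeft_prod_map_ι_mem_cliffordDegreeLT
      (Q := (0 : QuadraticForm R M)) d (List.ofFn v)
    rw [List.length_ofFn, List.map_ofFn] at contract_mem
    exact berezinIntegral_eq_zero_of_mem_cliffordDegreeLT e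
      (cliffordDegreeLT_mono hmn contract_mem)

variable {Q : QuadraticForm R M} {B : LinearMap.BilinForm R M} (h : B.toQuadraticMap = 0 - Q)

/-- The coefficient of degree `n` in a Clifford algebra, read off in the exterior algebra through
the linear isomorphism `changeForm h`: a functional which is tracial against even elements. -/
noncomputable def cliffordTopCoeff : CliffordAlgebra Q →ₗ[R] R :=
  berezinIntegral e ∘ₗ changeForm h

theorem cliffordTopCoeff_prod_ofFn_ι (v : Fin n → M) :
    cliffordTopCoeff e h (List.ofFn (ι Q ∘ v)).prod = e.det v := by
  have lower := changeForm_prod_map_ι_sub_mem_cliffordDegreeLT h (List.ofFn v)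
  rw [List.length_ofFn, List.map_ofFn, List.map_ofFn] at lower
  have same_integral := berezinIntegral_eq_zero_of_mem_cliffordDegreeLT e lower
  rw [map_sub, sub_eq_zero] at same_integral
  exact same_integral.trans (berezinIntegral_ιMulti e v)

theorem cliffordTopCoeff_mul_ι (x : CliffordAlgebra Q) (v : M) :
    cliffordTopCoeff e h (x * ι Q v) = cliffordTopCoeff e h (ι Q v * involute x) := by
  rw [cliffordTopCoeff, LinearMap.comp_apply, LinearMap.comp_apply, changeForm_mul_ι,
    changeForm_ι_mul, map_add, berezinIntegral_contractLeft, add_zero, map_sub,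
    berezinIntegral_contractLeft, sub_zero]

theorem cliffordTopCoeff_mul_ι_mul_ι (x : CliffordAlgebra Q) (v w : M) :
    cliffordTopCoeff e h (x * (ι Q v * ι Q w)) = cliffordTopCoeff e h (ι Q v * ι Q w * x) := by
  calc cliffordTopCoeff e h (x * (ι Q v * ι Q w))
      = cliffordTopCoeff e h (ι Q w * involute (x * ι Q v)) := by
        rw [← mul_assoc, cliffordTopCoeff_mul_ι]
    _ = -cliffordTopCoeff e h (ι Q w * involute x * ι Q v) := by
        rw [map_mul involute, involute_ι, mul_neg, mul_neg, map_neg, mul_assoc]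
    _ = -cliffordTopCoeff e h (ι Q v * involute (ι Q w * involute x)) := by
        rw [cliffordTopCoeff_mul_ι]
    _ = cliffordTopCoeff e h (ι Q v * ι Q w * x) := by
        rw [map_mul involute, involute_ι, involute_involute, neg_mul, mul_neg, map_neg, neg_neg,
          mul_assoc]

theorem cliffordTopCoeff_mul_comm_of_mem_even {g : CliffordAlgebra Q} (hg : g ∈ even Q)
    (x : CliffordAlgebra Q) :
    cliffordTopCoeff e h (g * x) = cliffordTopCoeff e h (x * g) := by
  induction g, hg using CliffordAlgebra.even_induction generalizing x with
  | algebraMap r => rw [Algebra.commutes]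
  | add g g' _ _ ih ih' => rw [add_mul, mul_add, map_add, map_add, ih, ih']
  | ι_mul_ι_mul v w g _ ih =>
    rw [mul_assoc, ← cliffordTopCoeff_mul_ι_mul_ι, mul_assoc, ih, mul_assoc]

end TopCoefficient

theorem prod_map_units_conj {A : Type*} [Monoid A] (g : Aˣ) (l : List A) :
    (l.map fun a => (g : A) * a * ↑g⁻¹).prod = g * l.prod * ↑g⁻¹ :=
  (map_list_prod (MulDistribMulAction.toMonoidHom A (ConjAct.toConjAct g)) l).symm

theorem cspin_adjoint_det_one_general {R M : Type*} [CommRing R] [AddCommGroup M] [Module R M]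
    [Module.Free R M] [Module.Finite R M] (Q : QuadraticForm R M) (g : (CliffordAlgebra Q)ˣ)
    (hg : (g : CliffordAlgebra Q) ∈ even Q) (σ : M →ₗ[R] M)
    (h : ∀ v : M, ι Q (σ v) = g * ι Q v * ↑g⁻¹) :
    LinearMap.det σ = 1 := by
  let e := (Module.Free.chooseBasis R M).reindex
    (Fintype.equivFin (Module.Free.ChooseBasisIndex R M))
  obtain ⟨B, hB⟩ := LinearMap.BilinMap.toQuadraticMap_surjective (0 - Q)
  let τ := cliffordTopCoeff e hB
  let ω := (List.ofFn (ι Q ∘ e)).prod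
  have conj_ω : (List.ofFn (ι Q ∘ σ ∘ e)).prod = g * ω * ↑g⁻¹ := by
    rw [← prod_map_units_conj, List.map_ofFn]
    exact congrArg (fun f => (List.ofFn f).prod) (funext fun i => h (e i))
  calc LinearMap.det σ = e.det (σ ∘ e) := by rw [e.det_comp, e.det_self, mul_one]
    _ = τ (List.ofFn (ι Q ∘ σ ∘ e)).prod := (cliffordTopCoeff_prod_ofFn_ι e hB _).symm
    _ = τ (g * (ω * ↑g⁻¹)) := by rw [conj_ω, mul_assoc]
    _ = τ (ω * ↑g⁻¹ * g) := cliffordTopCoeff_mul_comm_of_mem_even e hB hg _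
    _ = τ ω := by rw [Units.inv_mul_cancel_right]
    _ = 1 := by rw [cliffordTopCoeff_prod_ofFn_ι, e.det_self]

/-- Over a field of characteristic ≠ 2, with `Q` a quadratic form with nondegenerate polar
form, conjugation by an even unit of the Clifford algebra preserving `ι(V)` has
determinant 1: the adjoint action of `CSpin(V)` lands in `SO(V,Q)`. -/
theorem cspin_adjoint_det_one (k : Type*) [Field k] (h2 : (2 : k) ≠ 0)
    (V : Type*) [AddCommGroup V] [Module k V] [FiniteDimensional k V]
    (Q : QuadraticForm k V)
    (hQ : LinearMap.BilinForm.Nondegenerate (QuadraticMap.polarBilin Q))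
    (g : (CliffordAlgebra Q)ˣ)
    (hg : (g : CliffordAlgebra Q) ∈ CliffordAlgebra.even Q)
    (σ : V →ₗ[k] V)
    (h : ∀ v : V, CliffordAlgebra.ι Q (σ v) =
      (g : CliffordAlgebra Q) * CliffordAlgebra.ι Q v *
        ((g⁻¹ : (CliffordAlgebra Q)ˣ) : CliffordAlgebra Q)) :
    LinearMap.det σ = 1 :=
  cspin_adjoint_det_one_general Q g hg σ h
end

section
/- Let R be a commutative ring, M a free R-module of finite rank, and Q a quadratic form on M. For n ≥ 0, let C_n ⊆ Cl(M,Q) be the R-submodule spanned by all products of at most n elements of ι(M) (with C_{−1} = 0). Then the map sending m₁ ∧ ⋯ ∧ mₙ to the class of ι(m₁)⋯ι(mₙ) induces an R-module isomorphism from the n-th exterior power ⋀ⁿM onto the quotient C_n/C_{n−1}, and consequently each C_n is a free R-module. -/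
/-!
If `B` is a bilinear form with `B m m = Q m`, then `CliffordAlgebra.changeForm` is a linear
isomorphism `φ` from the exterior algebra (the Clifford algebra of `0`) onto the Clifford algebra of
`Q`. It is determined by `φ (m * x) = m * φ x - B m⌋φ x`, and contractions do not raise the
filtration, so `φ` carries one filtration onto the other and fixes products of `n` vectors up to
products of fewer. In the exterior algebra the filtration is split by the grading, which gives the
graded pieces; a quadratic form on a free module always comes from such a `B`. Freeness of the
filtration follows by induction, as each step is an extension of a free exterior power.
-/

section Submodule

variable {R V : Type*} [Ring R] [AddCommGroup V] [Module R V] {p q : Submodule R V}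

/-- The restriction to `p` of the quotient map by `q`, for disjoint `p` and `q`, as an isomorphism
onto `(p ⊔ q) / q`, realised as a submodule of `V ⧸ q`. -/
noncomputable def equivMapMkQSup (hpq : Disjoint p q) : p ≃ₗ[R] (p ⊔ q).map q.mkQ :=
  (LinearEquiv.ofInjective (q.mkQ.domRestrict p) <| by
    rwa [← LinearMap.ker_eq_bot, LinearMap.ker_domRestrict, Submodule.ker_mkQ,
      ← Submodule.disjoint_iff_comap_eq_bot]) ≪≫ₗ
  LinearEquiv.ofEq _ _ (by
    rw [LinearMap.range_domRestrict, Submodule.map_sup, Submodule.mkQ_map_self, sup_bot_eq])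

theorem free_of_exact {N P : Type*} [AddCommGroup N] [AddCommGroup P] [Module R N] [Module R P]
    [Module.Free R N] [Module.Free R P] {f : N →ₗ[R] V} {g : V →ₗ[R] P}
    (hf : Function.Injective f) (hfg : Function.Exact f g) (hg : Function.Surjective g) :
    Module.Free R V := by
  obtain ⟨s, hs⟩ := Module.projective_lifting_property g LinearMap.id hg
  exact Module.Free.of_equiv (hfg.splitSurjectiveEquiv hf ⟨s, hs⟩).1.symm

theorem free_of_free_map_mkQ (hpq : p ≤ q) [Module.Free R p] [Module.Free R (q.map p.mkQ)] :
    Module.Free R q := by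
  refine free_of_exact (Submodule.inclusion_injective hpq) (g := p.mkQ.submoduleMap q) ?_
    (LinearMap.submoduleMap_surjective _ _)
  rw [LinearMap.exact_iff, Submodule.range_inclusion]
  ext x
  simp [Subtype.ext_iff]

end Submodule

section CliffordFiltration

open CliffordAlgebra

variable {R M : Type*} [CommRing R] [AddCommGroup M] [Module R M]

/-- The increasing filtration of the Clifford algebra by word length. The index is shifted by one:
`cliffordFiltration Q n` is spanned by products of fewer than `n` vectors, so that `C_n` is
`cliffordFiltration Q (n + 1)` and `C_{-1} = 0` is `cliffordFiltration Q 0`. -/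
def cliffordFiltration (Q : QuadraticForm R M) (n : ℕ) : Submodule R (CliffordAlgebra Q) :=
  ⨆ i ∈ Finset.range n, LinearMap.range (ι Q) ^ i

section Filtration

variable (Q : QuadraticForm R M)

theorem cliffordFiltration_zero : cliffordFiltration Q 0 = ⊥ := by
  simp [cliffordFiltration]

theorem cliffordFiltration_succ (n : ℕ) :
    cliffordFiltration Q (n + 1) = LinearMap.range (ι Q) ^ n ⊔ cliffordFiltration Q n := by
  rw [cliffordFiltration, Finset.range_add_one, Finset.iSup_insert, cliffordFiltration]

theorem cliffordFiltration_mono : Monotone (cliffordFiltration Q) :=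
  fun _ _ h => biSup_mono (Finset.range_mono h)

theorem pow_range_ι_le_cliffordFiltration {i n : ℕ} (hin : i < n) :
    LinearMap.range (ι Q) ^ i ≤ cliffordFiltration Q n :=
  le_biSup (fun i => LinearMap.range (ι Q) ^ i) (Finset.mem_range.2 hin)

theorem one_mem_cliffordFiltration : (1 : CliffordAlgebra Q) ∈ cliffordFiltration Q 1 :=
  pow_range_ι_le_cliffordFiltration Q zero_lt_one (Submodule.one_le.1 (pow_zero _).ge)

theorem range_ι_mul_cliffordFiltration_le (n : ℕ) :
    LinearMap.range (ι Q) * cliffordFiltration Q n ≤ cliffordFiltration Q (n + 1) := by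
  simp only [cliffordFiltration, Submodule.mul_iSup, ← pow_succ']
  exact iSup₂_le fun i hi =>
    pow_range_ι_le_cliffordFiltration Q (Nat.succ_lt_succ (Finset.mem_range.1 hi))

end Filtration

variable {Q Q' : QuadraticForm R M}

theorem cliffordFiltration_le_comap {N : Type*} [AddCommGroup N] [Module R N]
    {f : CliffordAlgebra Q →ₗ[R] N} {G : ℕ → Submodule R N} (hG : Monotone G) (h_one : f 1 ∈ G 1)
    (h_mul : ∀ n m x, x ∈ cliffordFiltration Q (n + 1) → f x ∈ G (n + 1) →
      f (ι Q m * x) ∈ G (n + 2)) (n : ℕ) :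
    cliffordFiltration Q n ≤ (G n).comap f := by
  have h_pow : ∀ i, LinearMap.range (ι Q) ^ i ≤ (G (i + 1)).comap f := by
    intro i
    induction i with
    | zero => rwa [pow_zero, Submodule.one_le]
    | succ i ih =>
      rw [pow_succ', Submodule.mul_le]
      rintro _ ⟨m, rfl⟩ x hx
      exact h_mul i m x (pow_range_ι_le_cliffordFiltration Q i.lt_succ_self hx) (ih hx)
  exact iSup₂_le fun i hi =>
    (h_pow i).trans (Submodule.comap_mono (hG (Finset.mem_range.1 hi)))

theorem ι_mul_mem_cliffordFiltration (m : M) {n : ℕ} {x : CliffordAlgebra Q}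
    (hx : x ∈ cliffordFiltration Q n) : ι Q m * x ∈ cliffordFiltration Q (n + 1) :=
  range_ι_mul_cliffordFiltration_le Q n (Submodule.mul_mem_mul ⟨m, rfl⟩ hx)

theorem prod_map_ι_mem_cliffordFiltration (l : List M) :
    (l.map (ι Q)).prod ∈ cliffordFiltration Q (l.length + 1) := by
  induction l with
  | nil => exact one_mem_cliffordFiltration Q
  | cons m l ih => simpa using ι_mul_mem_cliffordFiltration m ih

theorem contractLeft_mem_cliffordFiltration (d : Module.Dual R M) {n : ℕ} {x : CliffordAlgebra Q}
    (hx : x ∈ cliffordFiltration Q n) : contractLeft d x ∈ cliffordFiltration Q n := by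
  refine cliffordFiltration_le_comap (cliffordFiltration_mono Q) ?_ (fun n m x hx hdx => ?_) n hx
  · rw [contractLeft_one]
    exact zero_mem _
  · rw [contractLeft_ι_mul]
    exact sub_mem (Submodule.smul_mem _ _ (cliffordFiltration_mono Q (Nat.le_succ _) hx))
      (ι_mul_mem_cliffordFiltration m hdx)

section ChangeForm

variable {B : LinearMap.BilinForm R M} (h : B.toQuadraticMap = Q' - Q)

theorem changeForm_mem_cliffordFiltration {n : ℕ} {x : CliffordAlgebra Q}
    (hx : x ∈ cliffordFiltration Q n) : changeForm h x ∈ cliffordFiltration Q' n := by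
  refine cliffordFiltration_le_comap (cliffordFiltration_mono Q') ?_ (fun n m x _ hx => ?_) n hx
  · rw [changeForm_one]
    exact one_mem_cliffordFiltration Q'
  · rw [changeForm_ι_mul]
    exact sub_mem (ι_mul_mem_cliffordFiltration m hx) (cliffordFiltration_mono Q' (Nat.le_succ _)
      (contractLeft_mem_cliffordFiltration _ hx))

theorem map_changeFormEquiv_cliffordFiltration (n : ℕ) :
    (cliffordFiltration Q n).map (changeFormEquiv h).toLinearMap = cliffordFiltration Q' n := by
  refine le_antisymm (Submodule.map_le_iff_le_comap.2 fun x hx =>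
    changeForm_mem_cliffordFiltration h hx) fun x hx => ?_
  exact ⟨(changeFormEquiv h).symm x,
    changeForm_mem_cliffordFiltration (changeForm.neg_proof h) hx,
    LinearEquiv.apply_symm_apply _ _⟩

theorem changeForm_prod_map_ι_sub_mem (l : List M) :
    changeForm h (l.map (ι Q)).prod - (l.map (ι Q')).prod ∈ cliffordFiltration Q' l.length := by
  induction l with
  | nil => simp
  | cons m l ih =>
    have h_split : changeForm h ((m :: l).map (ι Q)).prod - ((m :: l).map (ι Q')).prod =
        ι Q' m * (changeForm h (l.map (ι Q)).prod - (l.map (ι Q')).prod) -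
          contractLeft (B m) (changeForm h (l.map (ι Q)).prod) := by
      rw [List.map_cons, List.prod_cons, List.map_cons, List.prod_cons, changeForm_ι_mul, mul_sub,
        sub_right_comm]
    rw [h_split]
    exact sub_mem (ι_mul_mem_cliffordFiltration m ih) (contractLeft_mem_cliffordFiltration _
      (changeForm_mem_cliffordFiltration h (prod_map_ι_mem_cliffordFiltration l)))

end ChangeForm

theorem disjoint_exteriorPower_cliffordFiltration (n : ℕ) :
    Disjoint (⋀[R]^n M) (cliffordFiltration (0 : QuadraticForm R M) n) := by
  have h_indep : iSupIndep fun i : ℕ => ⋀[R]^i M :=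
    (DirectSum.Decomposition.isInternal _).submodule_iSupIndep
  exact h_indep.disjoint_biSup (y := (Finset.range n : Set ℕ)) (by simp)

section Graded

variable {B : LinearMap.BilinForm R M} (h : B.toQuadraticMap = Q - 0)

theorem disjoint_map_exteriorPower_cliffordFiltration (n : ℕ) :
    Disjoint ((⋀[R]^n M).map (changeFormEquiv h).toLinearMap) (cliffordFiltration Q n) := by
  rw [← map_changeFormEquiv_cliffordFiltration h n]
  exact Submodule.disjoint_map (changeFormEquiv h).injective
    (disjoint_exteriorPower_cliffordFiltration n)

theorem map_exteriorPower_sup_cliffordFiltration (n : ℕ) :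
    (⋀[R]^n M).map (changeFormEquiv h).toLinearMap ⊔ cliffordFiltration Q n =
      cliffordFiltration Q (n + 1) := by
  rw [← map_changeFormEquiv_cliffordFiltration h n, ← Submodule.map_sup,
    ← map_changeFormEquiv_cliffordFiltration h (n + 1), cliffordFiltration_succ]

/-- The isomorphism `⋀ⁿ M ≃ C_n / C_{n-1}` induced by a bilinear form refining `Q`; the quotient is
realised as the image of `C_n` in `CliffordAlgebra Q ⧸ C_{n-1}`. -/
noncomputable def exteriorPowerEquivGraded (n : ℕ) :
    ⋀[R]^n M ≃ₗ[R] (cliffordFiltration Q (n + 1)).map (cliffordFiltration Q n).mkQ :=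
  (changeFormEquiv h).submoduleMap (⋀[R]^n M) ≪≫ₗ
    equivMapMkQSup (disjoint_map_exteriorPower_cliffordFiltration h n) ≪≫ₗ
    LinearEquiv.ofEq _ _ (by rw [map_exteriorPower_sup_cliffordFiltration])

theorem exteriorPowerEquivGraded_ιMulti (n : ℕ) (m : Fin n → M) :
    (exteriorPowerEquivGraded h n (exteriorPower.ιMulti R n m) :
        CliffordAlgebra Q ⧸ cliffordFiltration Q n) =
      (cliffordFiltration Q n).mkQ (List.ofFn fun i => ι Q (m i)).prod := by
  have h_mem := changeForm_prod_map_ι_sub_mem h (List.ofFn m)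
  rw [List.map_ofFn, List.map_ofFn, List.length_ofFn] at h_mem
  exact (Submodule.Quotient.eq _).2 h_mem

include h in
theorem free_cliffordFiltration [∀ i, Module.Free R (⋀[R]^i M)] (n : ℕ) :
    Module.Free R (cliffordFiltration Q n) := by
  induction n with
  | zero =>
    rw [cliffordFiltration_zero]
    infer_instance
  | succ n ih =>
    have := Module.Free.of_equiv (exteriorPowerEquivGraded h n)
    exact free_of_free_map_mkQ (cliffordFiltration_mono Q n.le_succ)

end Graded

end CliffordFiltration

theorem clifford_filtration_graded_exterior_general {R M : Type*} [CommRing R] [AddCommGroup M]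
    [Module R M] [Module.Free R M] (Q : QuadraticForm R M) (n : ℕ) :
    (∃ e : ⋀[R]^n M ≃ₗ[R] (cliffordFiltration Q (n + 1)).map (cliffordFiltration Q n).mkQ,
      ∀ m : Fin n → M,
        (e (exteriorPower.ιMulti R n m) : CliffordAlgebra Q ⧸ cliffordFiltration Q n) =
          (cliffordFiltration Q n).mkQ (List.ofFn fun i => CliffordAlgebra.ι Q (m i)).prod) ∧
      Module.Free R (cliffordFiltration Q (n + 1)) := by
  obtain ⟨B, hB⟩ := LinearMap.BilinMap.toQuadraticMap_surjective (Q - 0)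
  exact ⟨⟨exteriorPowerEquivGraded hB n, exteriorPowerEquivGraded_ιMulti hB n⟩,
    free_cliffordFiltration hB (n + 1)⟩

/-- Let `C n ⊆ Cl(M,Q)` be the span of products of at most `n` elements of `ι(M)` (with
`C (-1) = 0`, encoded by `D` with `D 0 = ⊥`, `D (n+1) = C n`).  Then `m₁ ∧ ⋯ ∧ mₙ ↦
[ι(m₁)⋯ι(mₙ)]` induces an isomorphism `⋀ⁿM ≅ C n / C (n-1)`, and each `C n` is free. -/
theorem clifford_filtration_graded_exterior (R : Type*) [CommRing R]
    (M : Type*) [AddCommGroup M] [Module R M] [Module.Free R M] [Module.Finite R M]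
    (Q : QuadraticForm R M)
    (C : ℕ → Submodule R (CliffordAlgebra Q))
    (hC : ∀ n : ℕ, C n = ⨆ i ∈ Finset.range (n + 1),
      (LinearMap.range (CliffordAlgebra.ι Q)) ^ i)
    (D : ℕ → Submodule R (CliffordAlgebra Q))
    (hD0 : D 0 = ⊥) (hDs : ∀ n : ℕ, D (n + 1) = C n) :
    ∀ n : ℕ,
      (∃ e : (⋀[R]^n M) ≃ₗ[R] ↥(Submodule.map (D n).mkQ (C n)),
        ∀ m : Fin n → M,
          ((e ⟨ExteriorAlgebra.ιMulti R n m,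
              ExteriorAlgebra.ιMulti_range R n (Set.mem_range_self m)⟩ :
            CliffordAlgebra Q ⧸ D n)) =
          (D n).mkQ ((List.ofFn fun i => CliffordAlgebra.ι Q (m i)).prod)) ∧
      Module.Free R ↥(C n) := by
  obtain rfl : C = fun n => cliffordFiltration Q (n + 1) := funext hC
  obtain rfl : D = cliffordFiltration Q :=
    funext fun | 0 => hD0.trans (cliffordFiltration_zero Q).symm | n + 1 => hDs n
  exact clifford_filtration_graded_exterior_general Q
end
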